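/- arXiv:1211.4818 — 2 statements merged into one kernel-verified Lean document; each statement's English description precedes it below -/
import Mathlib

section
/- Assume the probability measure m on ℝ has a finite first moment, and assume either the uniform ellipticity condition (D3) holds, or the nondegeneracy condition (D2) holds and the cumulative distribution function F₀ = H*m satisfies F₀(x) > 0 for all x ∈ ℝ. Let F be the unique weak solution in 𝓕 of the Cauchy problem with initial condition F₀. Then the function (t,x) ↦ a(F_t(x)) is uniformly positive on every compact subset of [0,∞)×ℝ, i.e., for every compact K ⊂ [0,∞)×ℝ there exists c > 0 such that a(F_t(x)) ≥ c for all (t,x) ∈ K. -/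
open MeasureTheory Set Filter Topology Function
open scoped ENNReal

noncomputable section

/-- `primitive f u = ∫₀^u f(v) dv`. -/
def primitive (f : ℝ → ℝ) : ℝ → ℝ := fun u => ∫ v in (0:ℝ)..u, f v

/-- The cumulative distribution function `H * μ` of a measure `μ` on `ℝ`. -/
def cdfOf (μ : MeasureTheory.Measure ℝ) : ℝ → ℝ := fun x => (μ (Set.Iic x)).toReal

/-- Pseudo-inverse of a cdf: `F⁻¹(u) = inf {x | F x > u}`. -/
def pinv (F : ℝ → ℝ) (u : ℝ) : ℝ := sInf {x : ℝ | u < F x}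

/-- Wasserstein distance of order `p` between two cdfs, as an element of `[0,∞]`:
`W_p(F,G) = (∫₀¹ |F⁻¹(u) - G⁻¹(u)|^p du)^(1/p)`. -/
def Wdist (p : ℝ) (F G : ℝ → ℝ) : ℝ≥0∞ :=
  (∫⁻ u in Set.Ioo (0:ℝ) 1, ENNReal.ofReal (|pinv F u - pinv G u| ^ p)) ^ (1/p)

/-- `F` is a weak solution of `∂ₜ F = (1/2) ∂ₓₓ (A (F)) - ∂ₓ (B (F))` with
initial condition `F₀`. -/
def IsWeakSolution (A B : ℝ → ℝ) (F₀ : ℝ → ℝ) (F : ℝ → ℝ → ℝ) : Prop :=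
  ∀ g : ℝ → ℝ → ℝ, ContDiff ℝ (⊤ : ℕ∞) (Function.uncurry g) →
    HasCompactSupport (Function.uncurry g) →
    ∀ t : ℝ, 0 ≤ t →
      ((∫ x : ℝ, g t x * F t x) - ∫ x : ℝ, g 0 x * F₀ x) =
        ∫ x : ℝ, ∫ s in (0:ℝ)..t,
          ((1/2) * A (F s x) * deriv (deriv (fun y => g s y)) x
            + B (F s x) * deriv (fun y => g s y) x
            + F s x * deriv (fun r => g r x) s)

/-- Membership in the class `𝓕`. -/
def MemF (F : ℝ → ℝ → ℝ) : Prop :=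
  ∃ P : ℝ → ProbabilityMeasure ℝ,
    ContinuousOn P (Set.Ici 0) ∧
    (∀ t : ℝ, 0 ≤ t → Integrable (fun x => |x|) (P t : Measure ℝ)) ∧
    (∀ T : ℝ, 0 < T → IntegrableOn (fun t => ∫ x, |x| ∂(P t : Measure ℝ)) (Set.Icc 0 T)) ∧
    (∀ t : ℝ, 0 ≤ t → ∀ x : ℝ, F t x = ((P t : Measure ℝ) (Set.Iic x)).toReal)

/-!
Only case (D2) needs the equation, and there it suffices that `F` never vanishes: on a compact set
`F` is then bounded below by some `δ > 0`, and `a` is bounded below on `[δ, 1]`.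

To see that `F t` does not vanish, test the equation against a bump `g ≥ 0` whose support expands
in time faster than the drift can carry mass. If `L` and `M` bound `a` and `|b|`, then
`0 ≤ A u ≤ L u` and `|B u| ≤ M u` on `[0, 1]`, so the right-hand side of the weak formulation has a
nonnegative integrand as soon as `∂ₜg - M |∂ₓg| ≥ 0` and `∂ₜg - M |∂ₓg| + (L / 2) ∂ₓₓg ≥ 0`.
Hence `∫ g t · F t ≥ ∫ g 0 · F₀ > 0`, although `g t` lives arbitrarily far to the left.
-/

/-- Nonnegativity of `∂ₜg - M |∂ₓg| + (θ / 2) ∂ₓₓg` on `[0, t] × ℝ` for every diffusion coefficient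
`θ ∈ [0, L]`; by linearity in `θ` only the two endpoints are recorded. Such `g` are the test
functions along which weak solutions are compared with their initial condition. -/
def IsDualSubsolution (L M t : ℝ) (g : ℝ → ℝ → ℝ) : Prop :=
  ∀ s ∈ Icc 0 t, ∀ x,
    M * |deriv (g s) x| ≤ deriv (fun r => g r x) s ∧
    M * |deriv (g s) x| ≤ deriv (fun r => g r x) s + L / 2 * deriv (deriv (g s)) x

lemma add_add_nonneg_of_mul_abs_le {L M u α β gt gx gxx : ℝ} (hu : 0 ≤ u)
    (hα : α ∈ Icc 0 (L * u)) (hβ : |β| ≤ M * u) (h₀ : M * |gx| ≤ gt)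
    (h₁ : M * |gx| ≤ gt + L / 2 * gxx) :
    0 ≤ 1 / 2 * α * gxx + β * gx + u * gt := by
  have hdrift : -(u * (M * |gx|)) ≤ β * gx := by
    have := neg_abs_le (β * gx)
    rw [abs_mul] at this
    nlinarith [mul_le_mul_of_nonneg_right hβ (abs_nonneg gx)]
  rcases le_total 0 gxx with hgxx | hgxx
  · nlinarith [mul_nonneg hα.1 hgxx, mul_le_mul_of_nonneg_left h₀ hu]
  · nlinarith [mul_le_mul_of_nonpos_right hα.2 hgxx, mul_le_mul_of_nonneg_left h₁ hu]

lemma IsWeakSolution.integral_mul_le {A B F₀ : ℝ → ℝ} {F g : ℝ → ℝ → ℝ} {L M t : ℝ}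
    (hF : IsWeakSolution A B F₀ F) (hF01 : ∀ s, 0 ≤ s → ∀ x, F s x ∈ Icc 0 1)
    (hA : ∀ u ∈ Icc 0 1, A u ∈ Icc 0 (L * u)) (hB : ∀ u ∈ Icc 0 1, |B u| ≤ M * u)
    (hg : ContDiff ℝ (⊤ : ℕ∞) (uncurry g)) (hgc : HasCompactSupport (uncurry g))
    (ht : 0 ≤ t) (hsub : IsDualSubsolution L M t g) :
    ∫ x, g 0 x * F₀ x ≤ ∫ x, g t x * F t x := by
  rw [← sub_nonneg, hF g hg hgc t ht]
  refine integral_nonneg fun x => intervalIntegral.integral_nonneg ht fun s hs => ?_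
  have hu := hF01 s hs.1 x
  exact add_add_nonneg_of_mul_abs_le hu.1 (hA _ hu) (hB _ hu) (hsub s hs x).1 (hsub s hs x).2

/-! ### The expanding bump -/

lemma hasDerivAt_expNegInvGlue (q : ℝ) :
    HasDerivAt expNegInvGlue (q⁻¹ ^ 2 * expNegInvGlue q) q := by
  simpa using expNegInvGlue.hasDerivAt_polynomial_eval_inv_mul 1 q

lemma hasDerivAt_inv_sq_mul_expNegInvGlue (q : ℝ) :
    HasDerivAt (fun p => p⁻¹ ^ 2 * expNegInvGlue p)
      ((q⁻¹ ^ 4 - 2 * q⁻¹ ^ 3) * expNegInvGlue q) q := by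
  have h := expNegInvGlue.hasDerivAt_polynomial_eval_inv_mul (Polynomial.X ^ 2) q
  simp only [Polynomial.eval_pow, Polynomial.eval_X, Polynomial.derivative_X_pow,
    Polynomial.eval_mul, Polynomial.eval_sub, Polynomial.eval_C] at h
  refine h.congr_deriv ?_
  push_cast
  ring

/-- Defining function of the ellipse with centre `(τ, c)` whose interior is the positivity set of
`expandingBump`. The slice at time `s` is the interval `|ε (x - c)| < √(τ² + 1 - (s - τ)²)`, which
grows as long as `s ≤ τ`. -/
def bumpPhase (τ ε c s x : ℝ) : ℝ := τ ^ 2 + 1 - (s - τ) ^ 2 - (ε * (x - c)) ^ 2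

/-- Smooth test function positive exactly inside the ellipse `0 < bumpPhase τ ε c`. The factor
`exp (r * s)` compensates the diffusion where the bump is concave in `x`. -/
def expandingBump (r τ ε c s x : ℝ) : ℝ :=
  Real.exp (r * s) * expNegInvGlue (bumpPhase τ ε c s x)

section expandingBump

variable {r τ ε c s x : ℝ}

lemma expandingBump_nonneg : 0 ≤ expandingBump r τ ε c s x :=
  mul_nonneg (Real.exp_pos _).le (expNegInvGlue.nonneg _)

lemma expandingBump_eq_zero_iff : expandingBump r τ ε c s x = 0 ↔ bumpPhase τ ε c s x ≤ 0 := by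
  simp [expandingBump, Real.exp_ne_zero]

lemma contDiff_expandingBump : ContDiff ℝ (⊤ : ℕ∞) (uncurry (expandingBump r τ ε c)) := by
  unfold expandingBump bumpPhase Function.uncurry
  fun_prop

lemma hasCompactSupport_expandingBump (hε : 0 < ε) :
    HasCompactSupport (uncurry (expandingBump r τ ε c)) := by
  let R := τ ^ 2 + 1
  refine HasCompactSupport.intro (K := Icc (τ - R) (τ + R) ×ˢ Icc (c - R / ε) (c + R / ε))
    (isCompact_Icc.prod isCompact_Icc) fun ⟨s, x⟩ hsx => ?_
  contrapose! hsx
  have hphase : 0 < bumpPhase τ ε c s x := by simpa [expandingBump_eq_zero_iff] using hsx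
  have hR : R ≤ R ^ 2 := le_self_pow₀ (by simp only [R]; nlinarith) two_ne_zero
  have hs : |s - τ| ≤ R := abs_le_of_sq_le_sq (by unfold bumpPhase at hphase; nlinarith)
    (by positivity)
  have hx : |ε * (x - c)| ≤ R := abs_le_of_sq_le_sq (by unfold bumpPhase at hphase; nlinarith)
    (by positivity)
  rw [abs_mul, abs_of_pos hε, ← le_div_iff₀' hε] at hx
  rw [abs_le] at hs hx
  exact ⟨⟨by linarith, by linarith⟩, ⟨by linarith, by linarith⟩⟩

lemma hasDerivAt_bumpPhase_time :
    HasDerivAt (fun s => bumpPhase τ ε c s x) (-(2 * (s - τ))) s := by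
  have hsq : HasDerivAt (fun s => (s - τ) ^ 2) (2 * (s - τ)) s := by
    simpa using ((hasDerivAt_id' s).sub_const τ).fun_pow 2
  exact (hsq.const_sub _).sub_const _

lemma hasDerivAt_bumpPhase_space :
    HasDerivAt (bumpPhase τ ε c s) (-(2 * ε * (ε * (x - c)))) x := by
  have hsq : HasDerivAt (fun x => (ε * (x - c)) ^ 2) (2 * ε * (ε * (x - c))) x :=
    ((((hasDerivAt_id' x).sub_const c).const_mul ε).pow 2).congr_deriv (by push_cast; ring)
  exact hsq.const_sub _

lemma deriv_expandingBump_time :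
    deriv (fun s => expandingBump r τ ε c s x) s =
      (r - 2 * (s - τ) * (bumpPhase τ ε c s x)⁻¹ ^ 2) * expandingBump r τ ε c s x := by
  have hexp : HasDerivAt (fun s => Real.exp (r * s)) (Real.exp (r * s) * r) s := by
    simpa using ((hasDerivAt_id s).const_mul r).exp
  have hglue := (hasDerivAt_expNegInvGlue (bumpPhase τ ε c s x)).comp s hasDerivAt_bumpPhase_time
  refine ((hexp.mul hglue).congr_deriv ?_).deriv
  simp only [expandingBump, Function.comp_apply]
  ring

lemma deriv_expandingBump_space :
    deriv (expandingBump r τ ε c s) x =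
      -(2 * ε * (ε * (x - c))) * (bumpPhase τ ε c s x)⁻¹ ^ 2 * expandingBump r τ ε c s x := by
  have hglue := (hasDerivAt_expNegInvGlue (bumpPhase τ ε c s x)).comp x hasDerivAt_bumpPhase_space
  refine ((hglue.const_mul (Real.exp (r * s))).congr_deriv ?_).deriv
  simp only [expandingBump]
  ring

lemma deriv_deriv_expandingBump_space :
    deriv (deriv (expandingBump r τ ε c s)) x =
      ε ^ 2 * (4 * (ε * (x - c)) ^ 2 *
          ((bumpPhase τ ε c s x)⁻¹ ^ 4 - 2 * (bumpPhase τ ε c s x)⁻¹ ^ 3)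
        - 2 * (bumpPhase τ ε c s x)⁻¹ ^ 2) * expandingBump r τ ε c s x := by
  have hderiv : deriv (expandingBump r τ ε c s) = fun x =>
      Real.exp (r * s) * (-(2 * ε * (ε * (x - c))) *
        ((bumpPhase τ ε c s x)⁻¹ ^ 2 * expNegInvGlue (bumpPhase τ ε c s x))) := by
    funext x
    rw [deriv_expandingBump_space, expandingBump]
    ring
  have hlin : HasDerivAt (fun x => -(2 * ε * (ε * (x - c)))) (-(2 * ε * ε)) x := by
    simpa [mul_sub] using ((((hasDerivAt_id' x).sub_const c).const_mul ε).const_mul (2 * ε)).fun_neg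
  have hglue := (hasDerivAt_inv_sq_mul_expNegInvGlue (bumpPhase τ ε c s x)).comp x
    hasDerivAt_bumpPhase_space
  rw [hderiv]
  refine (((hlin.mul hglue).const_mul (Real.exp (r * s))).congr_deriv ?_).deriv
  simp only [expandingBump, Function.comp_apply]
  ring

lemma abs_le_of_expandingBump_ne_zero (hτ : 0 ≤ τ) (h : expandingBump r τ ε c s x ≠ 0) :
    |ε * (x - c)| ≤ τ + 1 := by
  rw [Ne, expandingBump_eq_zero_iff, not_le, bumpPhase] at h
  exact abs_le_of_sq_le_sq (by nlinarith [sq_nonneg (s - τ)]) (by positivity)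

lemma lt_add_div_of_expandingBump_ne_zero (hε : 0 < ε) (hτ : 0 ≤ τ)
    (h : expandingBump r τ ε c (τ - 1) x ≠ 0) : x < c + τ / ε := by
  rw [Ne, expandingBump_eq_zero_iff, not_le, bumpPhase] at h
  have hlt : ε * (x - c) < τ := lt_of_pow_lt_pow_left₀ 2 hτ (by linarith)
  rw [← sub_lt_iff_lt_add', lt_div_iff₀' hε]
  exact hlt

end expandingBump

lemma neg_two_le_pow_four_sub (y : ℝ) : -2 ≤ y ^ 4 - 2 * y ^ 3 := by
  nlinarith [sq_nonneg (y ^ 2 - y - 3 / 4), sq_nonneg (y - 3 / 2)]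

lemma drift_add_diffusion_le_expansion {L M ε R X σ : ℝ} (hM : 0 ≤ M) (hε : 0 ≤ ε)
    (hX : |X| ≤ R) (hσ : 1 ≤ σ) (hsmall : 2 * M * ε * R + L * ε ^ 2 ≤ 2) (y : ℝ) :
    2 * M * ε * |X| * y ^ 2 + L * ε ^ 2 * y ^ 2 ≤ 2 * σ * y ^ 2 := by
  have hdrift : 2 * M * ε * |X| ≤ 2 * M * ε * R := by gcongr
  rw [← add_mul]
  gcongr
  linarith

lemma concave_part_le_rate {L ε R X : ℝ} (hL : 0 ≤ L) (hX : |X| ≤ R) (y : ℝ) :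
    -(2 * L * ε ^ 2 * X ^ 2 * (y ^ 4 - 2 * y ^ 3)) ≤ 4 * L * ε ^ 2 * R ^ 2 :=
  calc -(2 * L * ε ^ 2 * X ^ 2 * (y ^ 4 - 2 * y ^ 3))
      = 2 * L * ε ^ 2 * X ^ 2 * -(y ^ 4 - 2 * y ^ 3) := by ring
    _ ≤ 2 * L * ε ^ 2 * X ^ 2 * 2 := by
      gcongr
      linarith [neg_two_le_pow_four_sub y]
    _ = 4 * L * ε ^ 2 * |X| ^ 2 := by
      rw [sq_abs]
      ring
    _ ≤ 4 * L * ε ^ 2 * R ^ 2 := by gcongr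

/-- The rate `4 L ε² (τ + 1)²` pays for the diffusion where the bump is concave. Up to time
`τ - 1` the phase grows at speed at least `2`, which pays for the drift and the remaining
diffusion. -/
lemma isDualSubsolution_expandingBump {L M τ ε : ℝ} (c : ℝ) (hL : 0 ≤ L) (hM : 0 ≤ M)
    (hε : 0 ≤ ε) (hτ : 0 ≤ τ) (hsmall : 2 * M * ε * (τ + 1) + L * ε ^ 2 ≤ 2) :
    IsDualSubsolution L M (τ - 1) (expandingBump (4 * L * ε ^ 2 * (τ + 1) ^ 2) τ ε c) := by
  intro s hs x
  rw [deriv_expandingBump_time, deriv_expandingBump_space, deriv_deriv_expandingBump_space]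
  set g := expandingBump (4 * L * ε ^ 2 * (τ + 1) ^ 2) τ ε c s x
  rcases eq_or_ne g 0 with hg0 | hg0
  · simp [hg0]
  have hX : |ε * (x - c)| ≤ τ + 1 := abs_le_of_expandingBump_ne_zero hτ hg0
  set X := ε * (x - c)
  set y := (bumpPhase τ ε c s x)⁻¹
  have hg : 0 ≤ g := expandingBump_nonneg
  have hexpand := drift_add_diffusion_le_expansion hM hε hX (le_sub_comm.1 hs.2) hsmall y
  have hconcave := concave_part_le_rate (ε := ε) hL hX y
  have hrate : 0 ≤ 4 * L * ε ^ 2 * (τ + 1) ^ 2 := by positivity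
  have hdiffusion : 0 ≤ L * ε ^ 2 * y ^ 2 := by positivity
  have habs : M * |-(2 * ε * X) * y ^ 2 * g| = 2 * M * ε * |X| * y ^ 2 * g := by
    rw [abs_mul, abs_mul, abs_neg, abs_mul, abs_mul, abs_two, abs_of_nonneg hε,
      abs_of_nonneg (sq_nonneg y), abs_of_nonneg hg]
    ring
  rw [habs, ← mul_assoc (L / 2), ← add_mul]
  exact ⟨mul_le_mul_of_nonneg_right (by linarith) hg,
    mul_le_mul_of_nonneg_right (by linarith) hg⟩

lemma exists_pos_mul_add_mul_sq_le_two (p q : ℝ) : ∃ ε > 0, p * ε + q * ε ^ 2 ≤ 2 := by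
  have hlim : Tendsto (fun ε : ℝ => p * ε + q * ε ^ 2) (𝓝[>] 0) (𝓝 0) := by
    refine tendsto_nhdsWithin_of_tendsto_nhds ?_
    simpa using (show Continuous fun ε : ℝ => p * ε + q * ε ^ 2 by fun_prop).tendsto 0
  obtain ⟨ε, hle, hε⟩ := ((hlim.eventually_le_const two_pos).and self_mem_nhdsWithin).exists
  exact ⟨ε, hε, hle⟩

lemma exists_isDualSubsolution_eq_zero_of_le {L M t : ℝ} (hL : 0 ≤ L) (hM : 0 ≤ M) (ht : 0 ≤ t)
    (z : ℝ) : ∃ g : ℝ → ℝ → ℝ, ContDiff ℝ (⊤ : ℕ∞) (uncurry g) ∧ HasCompactSupport (uncurry g) ∧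
      (∀ s x, 0 ≤ g s x) ∧ IsDualSubsolution L M t g ∧ (∃ x, g 0 x ≠ 0) ∧
      ∀ x, z ≤ x → g t x = 0 := by
  obtain ⟨τ, rfl⟩ : ∃ τ, t = τ - 1 := ⟨t + 1, by ring⟩
  have hτ : 0 ≤ τ := by linarith
  obtain ⟨ε, hε, hsmall⟩ := exists_pos_mul_add_mul_sq_le_two (2 * M * (τ + 1)) L
  refine ⟨expandingBump (4 * L * ε ^ 2 * (τ + 1) ^ 2) τ ε (z - τ / ε), contDiff_expandingBump,
    hasCompactSupport_expandingBump hε, fun _ _ => expandingBump_nonneg,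
    isDualSubsolution_expandingBump _ hL hM hε.le hτ (by linarith), ⟨z - τ / ε, ?_⟩,
    fun x hx => ?_⟩
  · simp [expandingBump_eq_zero_iff, bumpPhase]
  · contrapose! hx
    simpa using lt_add_div_of_expandingBump_ne_zero hε hτ hx

/-! ### Positivity of weak solutions -/

lemma hasCompactSupport_slice {X Y E : Type*} [TopologicalSpace X] [TopologicalSpace Y]
    [R1Space Y] [Zero E] {g : X → Y → E} (hg : HasCompactSupport (uncurry g)) (x : X) :
    HasCompactSupport (g x) :=
  .of_support_subset_isCompact (hg.isCompact.image continuous_snd) fun y hy =>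
    ⟨(x, y), subset_tsupport _ hy, rfl⟩

lemma integral_mul_pos_of_hasCompactSupport {X : Type*} [TopologicalSpace X] [T2Space X]
    [MeasurableSpace X] [OpensMeasurableSpace X] {μ : Measure X} [μ.IsOpenPosMeasure]
    {f g : X → ℝ} (hf : LocallyIntegrable f μ) (hfpos : ∀ x, 0 < f x) (hg : Continuous g)
    (hgc : HasCompactSupport g) (hg0 : ∀ x, 0 ≤ g x) {x₀ : X} (hx₀ : g x₀ ≠ 0) :
    0 < ∫ x, g x * f x ∂μ := by
  rw [integral_pos_iff_support_of_nonneg (fun x => mul_nonneg (hg0 x) (hfpos x).le)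
    (hf.integrable_smul_left_of_hasCompactSupport hg hgc)]
  have hsupp : support (fun x => g x * f x) = support g := by
    ext x
    simp [(hfpos x).ne']
  rw [hsupp]
  exact hg.isOpen_support.measure_pos μ ⟨x₀, hx₀⟩

theorem IsWeakSolution.pos {A B F₀ : ℝ → ℝ} {F : ℝ → ℝ → ℝ} {L M t : ℝ}
    (hF : IsWeakSolution A B F₀ F) (hF01 : ∀ s, 0 ≤ s → ∀ x, F s x ∈ Icc 0 1)
    (hA : ∀ u ∈ Icc 0 1, A u ∈ Icc 0 (L * u)) (hB : ∀ u ∈ Icc 0 1, |B u| ≤ M * u)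
    (hF₀ : LocallyIntegrable F₀) (hF₀pos : ∀ x, 0 < F₀ x) (ht : 0 ≤ t) (hmono : Monotone (F t))
    (z : ℝ) : 0 < F t z := by
  have hL : 0 ≤ L := by simpa using (hA 1 (by simp)).1.trans (hA 1 (by simp)).2
  have hM : 0 ≤ M := by simpa using (abs_nonneg _).trans (hB 1 (by simp))
  obtain ⟨g, hg, hgc, hg0, hsub, ⟨x₀, hx₀⟩, hgz⟩ :=
    exists_isDualSubsolution_eq_zero_of_le hL hM ht z
  have hinit : 0 < ∫ x, g 0 x * F₀ x :=
    integral_mul_pos_of_hasCompactSupport hF₀ hF₀pos (hg.continuous.uncurry_left 0)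
      (hasCompactSupport_slice hgc 0) (hg0 0) hx₀
  have hfinal : 0 < ∫ x, g t x * F t x :=
    hinit.trans_le (hF.integral_mul_le hF01 hA hB hg hgc ht hsub)
  by_contra! hz
  have hzero : ∀ x, g t x * F t x = 0 := fun x => by
    rcases le_total z x with hx | hx
    · rw [hgz x hx, zero_mul]
    · rw [le_antisymm ((hmono hx).trans hz) (hF01 t ht x).1, mul_zero]
  simp [hzero] at hfinal

/-! ### Bounds for primitives and distribution functions -/

lemma abs_primitive_le {f : ℝ → ℝ} {C u : ℝ} (hf : ∀ v ∈ Icc 0 1, |f v| ≤ C)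
    (hu : u ∈ Icc 0 1) : |primitive f u| ≤ C * u := by
  have h := intervalIntegral.norm_integral_le_of_norm_le_const (a := 0) (b := u) (f := f) (C := C)
    fun v hv => by
      rw [uIoc_of_le hu.1] at hv
      exact hf v ⟨hv.1.le, hv.2.trans hu.2⟩
  simpa [primitive, abs_of_nonneg hu.1] using h

lemma primitive_nonneg {f : ℝ → ℝ} {u : ℝ} (hf : ∀ v ∈ Ioc 0 1, 0 ≤ f v) (hu : u ∈ Icc 0 1) :
    0 ≤ primitive f u := by
  rw [primitive, intervalIntegral.integral_of_le hu.1]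
  exact setIntegral_nonneg measurableSet_Ioc fun v hv => hf v ⟨hv.1, hv.2.trans hu.2⟩

lemma monotone_cdfOf (μ : Measure ℝ) [IsFiniteMeasure μ] : Monotone (cdfOf μ) :=
  fun _ _ hxy => measureReal_mono (Iic_subset_Iic.2 hxy)

lemma cdfOf_mem_Icc (μ : Measure ℝ) [IsProbabilityMeasure μ] (x : ℝ) : cdfOf μ x ∈ Icc 0 1 :=
  ⟨measureReal_nonneg, measureReal_le_one⟩

lemma lowerSemicontinuousOn_measure_of_isOpen {T X : Type*} [TopologicalSpace T]
    [TopologicalSpace X] [MeasurableSpace X] [OpensMeasurableSpace X] [HasOuterApproxClosed X]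
    {P : T → ProbabilityMeasure X} {S : Set T} (hP : ContinuousOn P S) {U : Set X}
    (hU : IsOpen U) : LowerSemicontinuousOn (fun t => (P t : Measure X) U) S :=
  fun t ht _ hr => eventually_lt_of_lt_liminf
    (hr.trans_le (ProbabilityMeasure.le_liminf_measure_open_of_tendsto (hP t ht) hU))

lemma exists_pos_le_cdfOf_of_isCompact {T : Type*} [TopologicalSpace T]
    {P : T → ProbabilityMeasure ℝ} {S : Set T} (hP : ContinuousOn P S)
    (hpos : ∀ t ∈ S, ∀ x, 0 < cdfOf (P t) x) {K : Set (T × ℝ)} (hK : IsCompact K)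
    (hKS : K ⊆ S ×ˢ univ) : ∃ δ > 0, ∀ q ∈ K, δ ≤ cdfOf (P q.1) q.2 := by
  rcases K.eq_empty_or_nonempty with rfl | hne
  · exact ⟨1, one_pos, by simp⟩
  obtain ⟨R, hR⟩ := (hK.image continuous_snd).bddBelow
  have hlsc : LowerSemicontinuousOn (fun t => (P t : Measure ℝ) (Iio R)) (Prod.fst '' K) :=
    lowerSemicontinuousOn_measure_of_isOpen
      (hP.mono (image_subset_iff.2 fun q hq => (hKS hq).1)) isOpen_Iio
  obtain ⟨_, ⟨q₀, hq₀, rfl⟩, hmin⟩ :=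
    hlsc.exists_isMinOn (hne.image _) (hK.image continuous_fst)
  refine ⟨(P q₀.1 : Measure ℝ).real (Iio R), ?_, fun q hq => ?_⟩
  · exact (hpos q₀.1 (hKS hq₀).1 (R - 1)).trans_le
      (measureReal_mono (Iic_subset_Iio.2 (sub_one_lt R)))
  · refine (ENNReal.toReal_mono (measure_ne_top _ _) (hmin (mem_image_of_mem _ hq))).trans ?_
    exact measureReal_mono (Iio_subset_Iic (hR (mem_image_of_mem _ hq)))

theorem cdfOf_pos_of_isWeakSolution {a b F₀ : ℝ → ℝ} {F : ℝ → ℝ → ℝ}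
    {P : ℝ → ProbabilityMeasure ℝ} (ha : ContinuousOn a (Icc 0 1)) (hb : ContinuousOn b (Icc 0 1))
    (ha0 : ∀ u ∈ Ioc 0 1, 0 ≤ a u) (hF₀ : LocallyIntegrable F₀) (hF₀pos : ∀ x, 0 < F₀ x)
    (hF : IsWeakSolution (primitive a) (primitive b) F₀ F)
    (hPF : ∀ t, 0 ≤ t → ∀ x, F t x = cdfOf (P t) x) {t : ℝ} (ht : 0 ≤ t) (x : ℝ) :
    0 < cdfOf (P t) x := by
  obtain ⟨L, hL⟩ := isCompact_Icc.exists_bound_of_continuousOn ha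
  obtain ⟨M, hM⟩ := isCompact_Icc.exists_bound_of_continuousOn hb
  rw [← hPF t ht]
  refine hF.pos (L := L) (M := M) (fun s hs x => hPF s hs x ▸ cdfOf_mem_Icc _ x)
    (fun u hu => ⟨primitive_nonneg ha0 hu, (le_abs_self _).trans (abs_primitive_le hL hu)⟩)
    (fun u hu => abs_primitive_le hM hu) hF₀ hF₀pos ht ?_ x
  rw [funext (hPF t ht)]
  exact monotone_cdfOf _

theorem diffusion_coefficient_uniformly_positive_general {a b : ℝ → ℝ}
    (ha : ContinuousOn a (Icc 0 1)) (hb : ContinuousOn b (Icc 0 1))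
    {m : Measure ℝ} [IsFiniteMeasure m]
    (halt : (∃ c > 0, ∀ u ∈ Icc 0 1, c ≤ a u) ∨
      ((∀ u ∈ Ioc 0 1, 0 < a u) ∧ ∀ x, 0 < cdfOf m x))
    {F : ℝ → ℝ → ℝ} (hF : IsWeakSolution (primitive a) (primitive b) (cdfOf m) F)
    {P : ℝ → ProbabilityMeasure ℝ} (hP : ContinuousOn P (Ici 0))
    (hPF : ∀ t, 0 ≤ t → ∀ x, F t x = cdfOf (P t) x)
    {K : Set (ℝ × ℝ)} (hK : IsCompact K) (hK0 : K ⊆ Ici 0 ×ˢ univ) :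
    ∃ c > 0, ∀ q ∈ K, c ≤ a (F q.1 q.2) := by
  have hF01 : ∀ q ∈ K, F q.1 q.2 ∈ Icc 0 1 := fun q hq =>
    hPF q.1 (hK0 hq).1 q.2 ▸ cdfOf_mem_Icc _ _
  rcases halt with ⟨c, hc, hca⟩ | ⟨hapos, hm⟩
  · exact ⟨c, hc, fun q hq => hca _ (hF01 q hq)⟩
  obtain ⟨δ, hδ, hδF⟩ := exists_pos_le_cdfOf_of_isCompact hP
    (fun t ht => cdfOf_pos_of_isWeakSolution ha hb (fun u hu => (hapos u hu).le)
      (monotone_cdfOf m).locallyIntegrable hm hF hPF ht) hK hK0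
  obtain ⟨c, hc, hca⟩ := isCompact_Icc.exists_forall_le' (ha.mono (Icc_subset_Icc_left hδ.le))
    fun u hu => hapos u ⟨hδ.trans_le hu.1, hu.2⟩
  exact ⟨c, hc, fun q hq => hca _ ⟨hPF q.1 (hK0 hq).1 q.2 ▸ hδF q hq, (hF01 q hq).2⟩⟩

/-- Under (D3), or under (D2) together with positivity of `F₀`, the function
`(t,x) ↦ a(F_t(x))` is uniformly positive on compact subsets of `[0,∞) × ℝ`. -/
theorem diffusion_coefficient_uniformly_positive
    (a b : ℝ → ℝ)
    (ha : ContinuousOn a (Set.Icc 0 1)) (hb : ContinuousOn b (Set.Icc 0 1))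
    (ha0 : ∀ u ∈ Set.Icc (0:ℝ) 1, 0 ≤ a u)
    (m : Measure ℝ) [IsProbabilityMeasure m]
    (hm : Integrable (fun x => |x|) m)
    (halt : (∃ c > (0:ℝ), ∀ u ∈ Set.Icc (0:ℝ) 1, c ≤ a u) ∨
      ((∀ u ∈ Set.Ioc (0:ℝ) 1, 0 < a u) ∧ ∀ x : ℝ, 0 < cdfOf m x))
    (F : ℝ → ℝ → ℝ)
    (hF : IsWeakSolution (primitive a) (primitive b) (cdfOf m) F) (hFmem : MemF F) :
    ∀ K : Set (ℝ × ℝ), IsCompact K → K ⊆ Set.Ici 0 ×ˢ (Set.univ : Set ℝ) →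
      ∃ c > (0:ℝ), ∀ q ∈ K, c ≤ a (F q.1 q.2) := by
  intro K hK hK0
  obtain ⟨P, hP, -, -, hPF⟩ := hFmem
  exact diffusion_coefficient_uniformly_positive_general ha hb halt hF hP hPF hK hK0
end
end

section
/- Assume condition (D1) (A is increasing on [0,1]). If F∞ is a cumulative distribution function on ℝ solving the stationary equation (1/2)∂²_x(A(F∞(x))) − ∂_x(B(F∞(x))) = 0 in the sense of distributions, then F∞ is continuous on ℝ, B(1) = 0, B(u) ≥ 0 for all u ∈ [0,1], and the function u ↦ a(u)/(2B(u)) (with the convention that it equals 0 when a(u) = B(u) = 0) is locally integrable on (0,1). -/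
open MeasureTheory Set Filter Topology
open scoped ENNReal

noncomputable section

/-- `F` is the cumulative distribution function of a probability measure on `ℝ`. -/
def IsCDF (F : ℝ → ℝ) : Prop :=
  Monotone F ∧ (∀ x : ℝ, ContinuousWithinAt F (Set.Ici x) x) ∧
    Tendsto F atBot (nhds 0) ∧ Tendsto F atTop (nhds 1)

/-- `F` solves the stationary equation `(1/2) ∂ₓₓ (A(F)) - ∂ₓ (B(F)) = 0` in the sense
of distributions. -/
def IsStationarySolution (A B : ℝ → ℝ) (F : ℝ → ℝ) : Prop :=
  ∀ φ : ℝ → ℝ, ContDiff ℝ (⊤ : ℕ∞) φ → HasCompactSupport φ →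
    (1/2) * (∫ x : ℝ, A (F x) * deriv (deriv φ) x) + (∫ x : ℝ, B (F x) * deriv φ x) = 0

/-- `Ψ(u) = ∫_{1/2}^u a(v) / (2 B(v)) dv`. -/
def Psi (a b : ℝ → ℝ) (u : ℝ) : ℝ := ∫ v in (1/2:ℝ)..u, a v / (2 * primitive b v)

/-- The inverse of `Ψ`, extended by `1` above `lim_{u→1} Ψ(u)` and by `0` below
`lim_{u→0} Ψ(u)` when these limits are finite. -/
def PsiInv (a b : ℝ → ℝ) (x : ℝ) : ℝ :=
  sSup {u : ℝ | u ∈ Set.Ioo (0:ℝ) 1 ∧ Psi a b u ≤ x}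

/-!
By du Bois-Reymond, a distributional solution satisfies `A(F(x)) = 2 (∫₀ˣ B(F) + c + m x)` almost
everywhere, hence everywhere because `F` is right-continuous; since `A` is injective on `[0,1]`,
`F` is continuous, so `(A ∘ F)' = 2 (B ∘ F + m)`. As `A ∘ F` and `B ∘ F` converge at `±∞`, this
derivative vanishes there, so `m = -B(0)` and `B(1) = B(0)`; it is nonnegative since `A ∘ F` is
monotone. Finally, substituting `w = A(u)` and then `w = A(F(x))` bounds the integral of
`a / (2 (B - B(0)))` over `[c, d]` by the length of `F⁻¹([c, d])`.
-/

/-- Smooth compactly supported test functions `φ ∈ C_c^∞(ℝ)`, against which distributional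
equations on `ℝ` are tested. -/
structure IsTestFunction (φ : ℝ → ℝ) : Prop where
  contDiff : ContDiff ℝ (⊤ : ℕ∞) φ
  hasCompactSupport : HasCompactSupport φ

namespace IsTestFunction

variable {φ ψ : ℝ → ℝ}

lemma continuous (hφ : IsTestFunction φ) : Continuous φ :=
  hφ.contDiff.continuous

lemma hasDerivAt (hφ : IsTestFunction φ) (x : ℝ) : HasDerivAt φ (deriv φ x) x :=
  (hφ.contDiff.differentiable (by simp) x).hasDerivAt

protected lemma deriv (hφ : IsTestFunction φ) : IsTestFunction (deriv φ) :=
  ⟨(contDiff_infty_iff_deriv.1 hφ.contDiff).2, hφ.hasCompactSupport.deriv⟩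

lemma sub_const_smul (hφ : IsTestFunction φ) (hψ : IsTestFunction ψ) (k : ℝ) :
    IsTestFunction (φ - k • ψ) :=
  ⟨hφ.contDiff.sub (contDiff_const.smul hψ.contDiff),
    hφ.hasCompactSupport.sub (hψ.hasCompactSupport.smul_left (f := fun _ => k))⟩

lemma deriv_sub_const_smul (hφ : IsTestFunction φ) (hψ : IsTestFunction ψ) (k : ℝ) :
    deriv (φ - k • ψ) = deriv φ - k • deriv ψ :=
  funext fun x => ((hφ.hasDerivAt x).sub ((hψ.hasDerivAt x).const_smul k)).deriv

lemma integrable (hφ : IsTestFunction φ) : Integrable φ :=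
  hφ.continuous.integrable_of_hasCompactSupport hφ.hasCompactSupport

lemma integrable_smul {E : Type*} [NormedAddCommGroup E] [NormedSpace ℝ E] {f : ℝ → E}
    (hφ : IsTestFunction φ) (hf : LocallyIntegrable f) : Integrable fun x => φ x • f x :=
  hf.integrable_smul_left_of_hasCompactSupport hφ.continuous hφ.hasCompactSupport

lemma integral_sub_const_smul_smul {E : Type*} [NormedAddCommGroup E] [NormedSpace ℝ E]
    {f : ℝ → E} (hφ : IsTestFunction φ) (hψ : IsTestFunction ψ) (hf : LocallyIntegrable f)
    (k : ℝ) :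
    ∫ x, (φ - k • ψ) x • f x = (∫ x, φ x • f x) - k • ∫ x, ψ x • f x := by
  rw [← integral_smul, ← integral_sub (hφ.integrable_smul hf) ((hψ.integrable_smul hf).fun_smul k)]
  simp only [Pi.sub_apply, Pi.smul_apply, sub_smul, smul_assoc]

lemma exists_deriv_eq_of_integral_eq_zero (hψ : IsTestFunction ψ) (h0 : ∫ x, ψ x = 0) :
    ∃ φ, IsTestFunction φ ∧ deriv φ = ψ := by
  obtain ⟨R, -, hR⟩ := hψ.hasCompactSupport.exists_pos_le_norm
  let φ : ℝ → ℝ := fun x => ∫ t in Iic x, ψ t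
  have hφ_split : φ = fun x => φ 0 + ∫ t in (0 : ℝ)..x, ψ t := funext fun x => by
    rw [← intervalIntegral.integral_Iic_sub_Iic hψ.integrable.integrableOn
      hψ.integrable.integrableOn, add_sub_cancel]
  have hφ_deriv (x : ℝ) : HasDerivAt φ (ψ x) x := by
    rw [hφ_split]
    exact (hψ.continuous.integral_hasStrictDerivAt 0 x).hasDerivAt.const_add _
  have hderiv : deriv φ = ψ := funext fun x => (hφ_deriv x).deriv
  have hφ_supp : HasCompactSupport φ := by
    refine .intro (isCompact_Icc (a := -R) (b := R)) fun x hx => ?_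
    rcases lt_or_ge x (-R) with hxR | hxR
    · refine setIntegral_eq_zero_of_forall_eq_zero fun t ht => hR t ?_
      rw [Real.norm_eq_abs]
      exact le_abs.2 (.inr (by linarith [mem_Iic.1 ht]))
    · refine (setIntegral_eq_integral_of_forall_compl_eq_zero fun t ht => hR t ?_).trans h0
      have hRx : R < x := not_le.1 fun h => hx ⟨hxR, h⟩
      exact le_abs.2 (.inl (hRx.trans (not_le.1 ht)).le)
  refine ⟨φ, ⟨contDiff_infty_iff_deriv.2 ⟨fun x => (hφ_deriv x).differentiableAt, ?_⟩, hφ_supp⟩,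
    hderiv⟩
  exact hderiv ▸ hψ.contDiff

lemma exists_integral_eq_one : ∃ ρ, IsTestFunction ρ ∧ ∫ x, ρ x = 1 :=
  let bump : ContDiffBump (0 : ℝ) := ⟨1, 2, one_pos, one_lt_two⟩
  ⟨bump.normed volume, ⟨bump.contDiff_normed, bump.hasCompactSupport_normed⟩, bump.integral_normed⟩

lemma exists_forall_sub_integral_smul_eq_deriv :
    ∃ ρ, IsTestFunction ρ ∧ ∀ ψ, IsTestFunction ψ →
      ∃ φ, IsTestFunction φ ∧ deriv φ = ψ - (∫ x, ψ x) • ρ := by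
  obtain ⟨ρ, hρ, hρ_one⟩ := exists_integral_eq_one
  refine ⟨ρ, hρ, fun ψ hψ => ?_⟩
  refine (hψ.sub_const_smul hρ (∫ x, ψ x)).exists_deriv_eq_of_integral_eq_zero ?_
  have hintegral := hψ.integral_sub_const_smul_smul hρ (locallyIntegrable_const (1 : ℝ)) (∫ x, ψ x)
  simpa only [smul_eq_mul, mul_one, hρ_one, sub_self] using hintegral

lemma exists_tsupport_subset_Ioo (hφ : IsTestFunction φ) : ∃ R, tsupport φ ⊆ Ioo (-R) R := by
  obtain ⟨R, hR⟩ := hφ.hasCompactSupport.isCompact.isBounded.subset_ball 0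
  exact ⟨R, by simpa only [Real.ball_eq_Ioo, zero_sub, zero_add] using hR⟩

lemma integral_deriv_mul_primitive {f : ℝ → ℝ} (hφ : IsTestFunction φ)
    (hf : LocallyIntegrable f) :
    ∫ x, deriv φ x * ∫ t in (0 : ℝ)..x, f t = -∫ x, φ x * f x := by
  obtain ⟨R, hR⟩ := hφ.exists_tsupport_subset_Ioo
  let P : ℝ → ℝ := fun x => ∫ t in (0 : ℝ)..x, f t
  have hP_deriv : deriv P =ᵐ[volume] f :=
    (LocallyIntegrable.ae_hasDerivAt_integral hf).mono fun x hx => (hx 0).deriv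
  have hP_ac : AbsolutelyContinuousOnInterval P (-R) R :=
    (hf.integrableOn_isCompact isCompact_uIcc).intervalIntegrable
      |>.absolutelyContinuousOnInterval_intervalIntegral <| mem_uIcc.2 <|
        (le_total 0 R).imp (fun h => ⟨neg_nonpos.2 h, h⟩) fun h => ⟨h, neg_nonneg.2 h⟩
  have hφ_ac : AbsolutelyContinuousOnInterval φ (-R) R :=
    (hφ.contDiff.of_le (by simp)).contDiffOn.absolutelyContinuousOnInterval
  have hφ_zero {x : ℝ} (hx : x ∉ Ioo (-R) R) : φ x = 0 :=
    image_eq_zero_of_notMem_tsupport fun h => hx (hR h)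
  have hsupp_left : Function.support (fun x => deriv φ x * P x) ⊆ Ioc (-R) R :=
    (Function.support_mul_subset_left _ _).trans
      ((support_deriv_subset.trans hR).trans Ioo_subset_Ioc_self)
  have hsupp_right : Function.support (fun x => φ x * deriv P x) ⊆ Ioc (-R) R :=
    (Function.support_mul_subset_left _ _).trans
      (((subset_tsupport φ).trans hR).trans Ioo_subset_Ioc_self)
  calc ∫ x, deriv φ x * P x
      = ∫ x in -R..R, deriv φ x * P x :=
        (intervalIntegral.integral_eq_integral_of_support_subset hsupp_left).symm
    _ = -∫ x in -R..R, φ x * deriv P x := by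
        rw [hφ_ac.integral_mul_deriv_eq_deriv_mul hP_ac, hφ_zero right_notMem_Ioo,
          hφ_zero left_notMem_Ioo]
        ring
    _ = -∫ x, φ x * deriv P x := by
        rw [intervalIntegral.integral_eq_integral_of_support_subset hsupp_right]
    _ = -∫ x, φ x * f x := by
        rw [integral_congr_ae (hP_deriv.mono fun x hx => congrArg (φ x * ·) hx)]

end IsTestFunction

section DuBoisReymond

variable {E : Type*} [NormedAddCommGroup E] [NormedSpace ℝ E] [CompleteSpace E] {f : ℝ → E}

lemma ae_eq_const_of_integral_deriv_smul_eq_zero (hf : LocallyIntegrable f)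
    (h : ∀ φ, IsTestFunction φ → ∫ x, deriv φ x • f x = 0) :
    ∃ c : E, f =ᵐ[volume] fun _ => c := by
  obtain ⟨ρ, hρ, hρ_deriv⟩ := IsTestFunction.exists_forall_sub_integral_smul_eq_deriv
  refine ⟨∫ x, ρ x • f x, ae_eq_of_integral_contDiff_smul_eq hf (locallyIntegrable_const _) ?_⟩
  intro ψ hψ_contDiff hψ_supp
  have hψ : IsTestFunction ψ := ⟨hψ_contDiff, hψ_supp⟩
  obtain ⟨φ, hφ, hφ_deriv⟩ := hρ_deriv ψ hψ
  have hφ_zero := h φ hφ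
  rw [hφ_deriv, hψ.integral_sub_const_smul_smul hρ hf, sub_eq_zero] at hφ_zero
  rw [hφ_zero, integral_smul_const]

lemma ae_eq_affine_of_integral_deriv_deriv_smul_eq_zero (hf : LocallyIntegrable f)
    (h : ∀ φ, IsTestFunction φ → ∫ x, deriv (deriv φ) x • f x = 0) :
    ∃ c m : E, f =ᵐ[volume] fun x => c + x • m := by
  obtain ⟨ρ, hρ, hρ_deriv⟩ := IsTestFunction.exists_forall_sub_integral_smul_eq_deriv
  set m : E := -∫ x, deriv ρ x • f x with hm
  have hlin : LocallyIntegrable fun x : ℝ => x • m :=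
    (continuous_id.smul continuous_const).locallyIntegrable
  have hderiv_f (ψ : ℝ → ℝ) (hψ : IsTestFunction ψ) :
      ∫ x, deriv ψ x • f x = -(∫ x, ψ x) • m := by
    obtain ⟨φ, hφ, hφ_deriv⟩ := hρ_deriv ψ hψ
    have hφ_zero := h φ hφ
    rw [hφ_deriv, hψ.deriv_sub_const_smul hρ, hψ.deriv.integral_sub_const_smul_smul hρ.deriv hf,
      sub_eq_zero] at hφ_zero
    rw [hφ_zero, hm, neg_smul_neg]
  have hderiv_lin (ψ : ℝ → ℝ) (hψ : IsTestFunction ψ) :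
      ∫ x, deriv ψ x • x • m = -(∫ x, ψ x) • m := by
    have hparts := hψ.integral_deriv_mul_primitive (locallyIntegrable_const (1 : ℝ))
    simp only [intervalIntegral.integral_const, smul_eq_mul, mul_one, sub_zero] at hparts
    simp only [smul_smul]
    rw [integral_smul_const, hparts]
  obtain ⟨c, hc⟩ := ae_eq_const_of_integral_deriv_smul_eq_zero (hf.sub hlin) fun ψ hψ => by
    simp only [Pi.sub_apply, smul_sub]
    rw [integral_sub (hψ.deriv.integrable_smul hf) (hψ.deriv.integrable_smul hlin),
      hderiv_f ψ hψ, hderiv_lin ψ hψ, sub_self]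
  exact ⟨c, m, hc.mono fun x hx => sub_eq_iff_eq_add.1 hx⟩

end DuBoisReymond

lemma continuous_intervalIntegral_of_locallyIntegrable {E : Type*} [NormedAddCommGroup E]
    [NormedSpace ℝ E] {f : ℝ → E} (hf : LocallyIntegrable f) (a : ℝ) :
    Continuous fun x => ∫ t in a..x, f t :=
  intervalIntegral.continuous_primitive (fun _ _ =>
    (hf.integrableOn_isCompact isCompact_uIcc).intervalIntegrable) a

lemma ae_eq_of_half_integral_deriv_deriv_add_integral_deriv_eq_zero {G H : ℝ → ℝ}
    (hG : LocallyIntegrable G) (hH : LocallyIntegrable H)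
    (h : ∀ φ, IsTestFunction φ →
      (1 / 2) * (∫ x, G x * deriv (deriv φ) x) + ∫ x, H x * deriv φ x = 0) :
    ∃ c m : ℝ, G =ᵐ[volume] fun x => 2 * ((∫ t in (0 : ℝ)..x, H t) + c + m * x) := by
  let P : ℝ → ℝ := fun x => ∫ t in (0 : ℝ)..x, H t
  have hP : LocallyIntegrable P :=
    (continuous_intervalIntegral_of_locallyIntegrable hH 0).locallyIntegrable
  have hG_half : LocallyIntegrable fun x => (1 / 2 : ℝ) • G x := hG.smul (1 / 2 : ℝ)
  obtain ⟨c, m, hcm⟩ :=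
    ae_eq_affine_of_integral_deriv_deriv_smul_eq_zero (hG_half.sub hP) fun φ hφ => by
      have hparts := hφ.deriv.integral_deriv_mul_primitive hH
      have hφ_zero := h φ hφ
      simp only [Pi.sub_apply, smul_sub]
      rw [integral_sub (hφ.deriv.deriv.integrable_smul hG_half)
        (hφ.deriv.deriv.integrable_smul hP)]
      simp only [smul_eq_mul, P, hparts, mul_left_comm _ (1 / 2 : ℝ), integral_const_mul]
      simpa only [mul_comm (deriv _ _), sub_neg_eq_add] using hφ_zero
  refine ⟨c, m, hcm.mono fun x hx => ?_⟩
  simp only [Pi.sub_apply, smul_eq_mul] at hx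
  linarith

lemma eq_of_ae_eq_of_continuousWithinAt_Ici {Y : Type*} [TopologicalSpace Y] [T2Space Y]
    {f g : ℝ → Y} (hf : ∀ x, ContinuousWithinAt f (Ici x) x)
    (hg : ∀ x, ContinuousWithinAt g (Ici x) x) (hfg : f =ᵐ[volume] g) : f = g := by
  funext x
  refine tendsto_nhds_unique_of_frequently_eq (l := 𝓝[>] x) ((hf x).mono Ioi_subset_Ici_self)
    ((hg x).mono Ioi_subset_Ici_self) ((nhdsGT_basis x).frequently_iff.2 fun y hy => ?_)
  exact (Measure.dense_of_ae hfg).exists_mem_open isOpen_Ioo (nonempty_Ioo.2 hy) |>.imp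
    fun _ => And.symm

lemma continuous_of_comp_injOn_isCompact {X Y Z : Type*} [TopologicalSpace X] [TopologicalSpace Y]
    [TopologicalSpace Z] [T2Space Z] {K : Set Y} {A : Y → Z} {F : X → Y} (hK : IsCompact K)
    (hA : ContinuousOn A K) (hA_inj : InjOn A K) (hF : ∀ x, F x ∈ K)
    (hAF : Continuous fun x => A (F x)) : Continuous F := by
  have : CompactSpace K := isCompact_iff_compactSpace.1 hK
  have hA_emb : IsClosedEmbedding (K.domRestrict A) :=
    (continuousOn_iff_continuous_domRestrict.1 hA).isClosedEmbedding
      (injOn_iff_injective.1 hA_inj)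
  have hF_cod : Continuous fun x => (⟨F x, hF x⟩ : K) := hA_emb.isInducing.continuous_iff.2 hAF
  exact continuous_subtype_val.comp hF_cod

lemma locallyIntegrable_comp_of_continuousOn_isCompact {K : Set ℝ} {f F : ℝ → ℝ}
    (hK : IsCompact K) (hf : ContinuousOn f K) (hF : Measurable F) (hFK : ∀ x, F x ∈ K) :
    LocallyIntegrable fun x => f (F x) := by
  obtain ⟨M, hM⟩ := hK.exists_bound_of_continuousOn hf
  have hmeas : Measurable fun x => f (F x) :=
    (continuousOn_iff_continuous_domRestrict.1 hf).measurable.comp (hF.subtype_mk (h := hFK))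
  exact (locallyIntegrable_const M).mono hmeas.aestronglyMeasurable
    (ae_of_all _ fun x => (hM _ (hFK x)).trans (le_abs_self M))

lemma eq_zero_of_tendsto_of_tendsto_deriv {l : Filter ℝ} [l.NeBot] [TendstoIxxClass Icc l l]
    {g g' : ℝ → ℝ} {y y' : ℝ} (hl : Tendsto (fun x => x + 1) l l)
    (hg : ∀ x, HasDerivAt g (g' x) x) (hy : Tendsto g l (𝓝 y)) (hy' : Tendsto g' l (𝓝 y')) :
    y' = 0 := by
  have hmvt (x : ℝ) : ∃ c ∈ Icc x (x + 1), g' c = g (x + 1) - g x := by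
    obtain ⟨c, hc, hc_slope⟩ := exists_hasDerivAt_eq_slope g g' (lt_add_one x)
      (fun z _ => (hg z).continuousAt.continuousWithinAt) fun z _ => hg z
    exact ⟨c, Ioo_subset_Icc_self hc, by rw [hc_slope, add_sub_cancel_left, div_one]⟩
  choose c hc_mem hc using hmvt
  have hc_tendsto : Tendsto c l l := (tendsto_id.Icc hl).of_smallSets (.of_forall hc_mem)
  have hdiff : Tendsto (fun x => g' (c x)) l (𝓝 (y - y)) := by
    simp only [hc]
    exact (hy.comp hl).sub hy
  rw [sub_self] at hdiff
  exact tendsto_nhds_unique (hy'.comp hc_tendsto) hdiff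

/-- Both sides are the integral of the same function of `w = A u = A (F x)`: this turns
`a / q` into `q / q ≤ 1`, where the critical values `q = 0` carry no mass because `0 * ⊤ = 0`. -/
lemma setLIntegral_image_ofReal_div_le {s : Set ℝ} {A F a q : ℝ → ℝ} (hs : MeasurableSet s)
    (hF : MonotoneOn F s) (hA : StrictMonoOn A (F '' s))
    (ha : ∀ u ∈ F '' s, HasDerivWithinAt A (a u) (F '' s) u)
    (hq : ∀ x ∈ s, HasDerivWithinAt (A ∘ F) (q (F x)) s x) :
    ∫⁻ u in F '' s, ENNReal.ofReal (a u) / ENNReal.ofReal (q u) ≤ volume s := by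
  let k : ℝ → ℝ≥0∞ := fun w => (ENNReal.ofReal (q (Function.invFunOn A (F '' s) w)))⁻¹
  have hk {u : ℝ} (hu : u ∈ F '' s) : k (A u) = (ENNReal.ofReal (q u))⁻¹ := by
    simp only [k, hA.injOn.leftInvOn_invFunOn hu]
  have hFs : MeasurableSet (F '' s) := hs.image_of_monotoneOn hF
  have hAF : MonotoneOn (A ∘ F) s := hA.monotoneOn.comp hF (mapsTo_image F s)
  calc ∫⁻ u in F '' s, ENNReal.ofReal (a u) / ENNReal.ofReal (q u)
      = ∫⁻ u in F '' s, ENNReal.ofReal (a u) * k (A u) :=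
        setLIntegral_congr_fun hFs fun u hu => by rw [hk hu, div_eq_mul_inv]
    _ = ∫⁻ w in (A ∘ F) '' s, k w := by
        rw [← lintegral_image_eq_lintegral_deriv_mul_of_monotoneOn hFs ha hA.monotoneOn, image_comp]
    _ = ∫⁻ x in s, ENNReal.ofReal (q (F x)) * k (A (F x)) :=
        lintegral_image_eq_lintegral_deriv_mul_of_monotoneOn hs hq hAF k
    _ ≤ ∫⁻ _ in s, 1 :=
        setLIntegral_mono' hs fun x hx => by
          rw [hk (mem_image_of_mem F hx)]
          exact ENNReal.mul_inv_le_one _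
    _ = volume s := setLIntegral_one s

namespace IsCDF

variable {F : ℝ → ℝ}

lemma mem_Icc (hF : IsCDF F) (x : ℝ) : F x ∈ Icc (0 : ℝ) 1 :=
  ⟨hF.1.le_of_tendsto hF.2.2.1 x, hF.1.ge_of_tendsto hF.2.2.2 x⟩

lemma Ioo_subset_range (hF : IsCDF F) (hF_cont : Continuous F) : Ioo (0 : ℝ) 1 ⊆ range F :=
  fun _ hu => mem_range_of_exists_le_of_exists_ge hF_cont
    ((hF.2.2.1.eventually_le_const hu.1).exists) ((hF.2.2.2.eventually_const_le hu.2).exists)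

lemma volume_preimage_Icc_lt_top (hF : IsCDF F) {c d : ℝ} (hc : 0 < c) (hd : d < 1) :
    volume (F ⁻¹' Icc c d) < ⊤ := by
  obtain ⟨x, hx⟩ := (hF.2.2.1.eventually_lt_const hc).exists
  obtain ⟨y, hy⟩ := (hF.2.2.2.eventually_const_lt hd).exists
  have hsub : F ⁻¹' Icc c d ⊆ Icc x y := fun z hz =>
    ⟨(hF.1.reflect_lt (hx.trans_le hz.1)).le, (hF.1.reflect_lt (hz.2.trans_lt hy)).le⟩
  exact (measure_mono hsub).trans_lt measure_Icc_lt_top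

variable {f : ℝ → ℝ}

lemma locallyIntegrable_comp (hF : IsCDF F) (hf : ContinuousOn f (Icc 0 1)) :
    LocallyIntegrable fun x => f (F x) :=
  locallyIntegrable_comp_of_continuousOn_isCompact isCompact_Icc hf hF.1.measurable hF.mem_Icc

lemma continuousWithinAt_comp (hF : IsCDF F) (hf : ContinuousOn f (Icc 0 1)) (x : ℝ) :
    ContinuousWithinAt (fun x => f (F x)) (Ici x) x :=
  (hf _ (hF.mem_Icc x)).comp (hF.2.1 x) fun y _ => hF.mem_Icc y

lemma tendsto_comp_atBot (hF : IsCDF F) (hf : ContinuousOn f (Icc 0 1)) :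
    Tendsto (fun x => f (F x)) atBot (𝓝 (f 0)) :=
  (hf 0 (left_mem_Icc.2 zero_le_one)).tendsto.comp
    (tendsto_nhdsWithin_iff.2 ⟨hF.2.2.1, .of_forall hF.mem_Icc⟩)

lemma tendsto_comp_atTop (hF : IsCDF F) (hf : ContinuousOn f (Icc 0 1)) :
    Tendsto (fun x => f (F x)) atTop (𝓝 (f 1)) :=
  (hf 1 (right_mem_Icc.2 zero_le_one)).tendsto.comp
    (tendsto_nhdsWithin_iff.2 ⟨hF.2.2.2, .of_forall hF.mem_Icc⟩)

end IsCDF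

namespace IsStationarySolution

variable {A B F : ℝ → ℝ}

lemma exists_comp_eq_primitive (hsol : IsStationarySolution A B F) (hF : IsCDF F)
    (hA : ContinuousOn A (Icc 0 1)) (hB : ContinuousOn B (Icc 0 1)) :
    ∃ c m : ℝ, ∀ x, A (F x) = 2 * ((∫ t in (0 : ℝ)..x, B (F t)) + c + m * x) := by
  have hBF := hF.locallyIntegrable_comp hB
  obtain ⟨c, m, hcm⟩ := ae_eq_of_half_integral_deriv_deriv_add_integral_deriv_eq_zero
    (hF.locallyIntegrable_comp hA) hBF fun φ hφ => hsol φ hφ.contDiff hφ.hasCompactSupport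
  have hcont : Continuous fun x => 2 * ((∫ t in (0 : ℝ)..x, B (F t)) + c + m * x) := by
    have hP_cont := continuous_intervalIntegral_of_locallyIntegrable hBF 0
    fun_prop
  exact ⟨c, m, congrFun <| eq_of_ae_eq_of_continuousWithinAt_Ici (hF.continuousWithinAt_comp hA)
    (fun _ => hcont.continuousWithinAt) hcm⟩

protected lemma continuous (hsol : IsStationarySolution A B F) (hF : IsCDF F)
    (hA : ContinuousOn A (Icc 0 1)) (hB : ContinuousOn B (Icc 0 1)) (hA_inj : InjOn A (Icc 0 1)) :
    Continuous F := by
  obtain ⟨c, m, hcm⟩ := hsol.exists_comp_eq_primitive hF hA hB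
  have hP_cont := continuous_intervalIntegral_of_locallyIntegrable (hF.locallyIntegrable_comp hB) 0
  refine continuous_of_comp_injOn_isCompact isCompact_Icc hA hA_inj hF.mem_Icc ?_
  simp only [hcm]
  fun_prop

lemma hasDerivAt_comp (hsol : IsStationarySolution A B F) (hF : IsCDF F)
    (hF_cont : Continuous F) (hA : ContinuousOn A (Icc 0 1)) (hB : ContinuousOn B (Icc 0 1))
    (x : ℝ) : HasDerivAt (fun y => A (F y)) (2 * (B (F x) - B 0)) x := by
  obtain ⟨c, m, hcm⟩ := hsol.exists_comp_eq_primitive hF hA hB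
  have hBF : Continuous fun y => B (F y) := hB.comp_continuous hF_cont hF.mem_Icc
  have hderiv (y : ℝ) : HasDerivAt (fun z => A (F z)) (2 * (B (F y) + m)) y := by
    simp only [hcm]
    have hlin : HasDerivAt (fun z => m * z) m y := by
      simpa only [mul_one] using (hasDerivAt_id' y).const_mul m
    exact (((hBF.integral_hasStrictDerivAt 0 y).hasDerivAt.add_const c).add hlin).const_mul 2
  have hlim : 2 * (B 0 + m) = 0 := eq_zero_of_tendsto_of_tendsto_deriv
    (tendsto_atBot_add_const_right _ 1 tendsto_id) hderiv (hF.tendsto_comp_atBot hA)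
    (((hF.tendsto_comp_atBot hB).add_const m).const_mul 2)
  have hm : m = -B 0 := by linarith
  simpa only [hm, ← sub_eq_add_neg] using hderiv x

lemma apply_one_eq_apply_zero (hsol : IsStationarySolution A B F) (hF : IsCDF F)
    (hF_cont : Continuous F) (hA : ContinuousOn A (Icc 0 1)) (hB : ContinuousOn B (Icc 0 1)) :
    B 1 = B 0 := by
  have hlim : 2 * (B 1 - B 0) = 0 := eq_zero_of_tendsto_of_tendsto_deriv
    (tendsto_atTop_add_const_right _ 1 tendsto_id) (hsol.hasDerivAt_comp hF hF_cont hA hB)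
    (hF.tendsto_comp_atTop hA) (((hF.tendsto_comp_atTop hB).sub_const (B 0)).const_mul 2)
  linarith

lemma apply_zero_le (hsol : IsStationarySolution A B F) (hF : IsCDF F)
    (hF_cont : Continuous F) (hA : ContinuousOn A (Icc 0 1)) (hB : ContinuousOn B (Icc 0 1))
    (hA_mono : MonotoneOn A (Icc 0 1)) {u : ℝ} (hu : u ∈ Icc (0 : ℝ) 1) : B 0 ≤ B u := by
  rcases eq_endpoints_or_mem_Ioo_of_mem_Icc hu with rfl | rfl | hu
  · exact le_rfl
  · exact (hsol.apply_one_eq_apply_zero hF hF_cont hA hB).ge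
  obtain ⟨x, rfl⟩ := hF.Ioo_subset_range hF_cont hu
  have hAF_mono : Monotone fun y => A (F y) := fun y z hyz =>
    hA_mono (hF.mem_Icc y) (hF.mem_Icc z) (hF.1 hyz)
  have hderiv_nonneg := hAF_mono.deriv_nonneg (x := x)
  rw [(hsol.hasDerivAt_comp hF hF_cont hA hB x).deriv] at hderiv_nonneg
  linarith

lemma setLIntegral_div_lt_top {a : ℝ → ℝ} (hsol : IsStationarySolution A B F) (hF : IsCDF F)
    (hF_cont : Continuous F) (hA : ContinuousOn A (Icc 0 1)) (hB : ContinuousOn B (Icc 0 1))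
    (hA_mono : StrictMonoOn A (Icc 0 1)) (ha : ∀ u ∈ Ioo (0 : ℝ) 1, HasDerivAt A (a u) u)
    {c d : ℝ} (hc : 0 < c) (hd : d < 1) :
    ∫⁻ u in Icc c d, ENNReal.ofReal (a u) / ENNReal.ofReal (2 * (B u - B 0)) < ⊤ := by
  have hcd : Icc c d ⊆ Ioo 0 1 := Icc_subset_Ioo hc hd
  have himage : F '' (F ⁻¹' Icc c d) = Icc c d :=
    image_preimage_eq_of_subset (hcd.trans (hF.Ioo_subset_range hF_cont))
  have hle := setLIntegral_image_ofReal_div_le (s := F ⁻¹' Icc c d) (A := A) (a := a)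
    (q := fun u => 2 * (B u - B 0)) (hF.1.measurable measurableSet_Icc) (hF.1.monotoneOn _)
    (hA_mono.mono (himage.trans_subset (hcd.trans Ioo_subset_Icc_self)))
    (fun u hu => (ha u (hcd (himage.subset hu))).hasDerivWithinAt)
    fun x _ => (hsol.hasDerivAt_comp hF hF_cont hA hB x).hasDerivWithinAt
  rw [himage] at hle
  exact hle.trans_lt (hF.volume_preimage_Icc_lt_top hc hd)

end IsStationarySolution

theorem stationary_solution_necessary_conditions_general {A B a F : ℝ → ℝ}
    (hA : ContinuousOn A (Icc 0 1)) (hB : ContinuousOn B (Icc 0 1))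
    (hA_mono : StrictMonoOn A (Icc 0 1)) (ha : ∀ u ∈ Ioo (0 : ℝ) 1, HasDerivAt A (a u) u)
    (hF : IsCDF F) (hsol : IsStationarySolution A B F) :
    Continuous F ∧ B 1 = B 0 ∧ (∀ u ∈ Icc (0 : ℝ) 1, B 0 ≤ B u) ∧
      ∀ c d : ℝ, 0 < c → d < 1 →
        ∫⁻ u in Icc c d, ENNReal.ofReal (a u) / ENNReal.ofReal (2 * (B u - B 0)) < ⊤ :=
  have hF_cont := hsol.continuous hF hA hB hA_mono.injOn
  ⟨hF_cont, hsol.apply_one_eq_apply_zero hF hF_cont hA hB,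
    fun _ => hsol.apply_zero_le hF hF_cont hA hB hA_mono.monotoneOn,
    fun _ _ => hsol.setLIntegral_div_lt_top hF hF_cont hA hB hA_mono ha⟩

section Primitive

variable {f : ℝ → ℝ}

lemma primitive_zero (f : ℝ → ℝ) : primitive f 0 = 0 :=
  intervalIntegral.integral_same

lemma continuousOn_primitive (hf : ContinuousOn f (Icc 0 1)) :
    ContinuousOn (primitive f) (Icc 0 1) := by
  have h := intervalIntegral.continuousOn_primitive_interval (μ := volume) (a := 0) (b := 1)
    (f := f) (by rw [uIcc_of_le zero_le_one]; exact hf.integrableOn_Icc)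
  rwa [uIcc_of_le zero_le_one] at h

lemma hasDerivAt_primitive (hf : ContinuousOn f (Icc 0 1)) {u : ℝ} (hu : u ∈ Ioo (0 : ℝ) 1) :
    HasDerivAt (primitive f) (f u) u := by
  have hu_nhds : Icc (0 : ℝ) 1 ∈ 𝓝 u := Icc_mem_nhds hu.1 hu.2
  exact intervalIntegral.integral_hasDerivAt_right
    ((hf.mono (Icc_subset_Icc_right hu.2.le)).intervalIntegrable_of_Icc hu.1.le)
    (hf.stronglyMeasurableAtFilter_nhdsWithin measurableSet_Icc u |>.filter_mono
      (nhdsWithin_eq_nhds.2 hu_nhds).ge) (hf.continuousAt hu_nhds)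

end Primitive

/-- Necessary conditions for a cdf to solve the stationary equation: continuity,
`B(1) = 0`, `B ≥ 0`, and local integrability of `a/(2B)` on `(0,1)` (with the
convention that `a/(2B) = 0` where `a = B = 0`, encoded by the `ℝ≥0∞`-valued
quotient for which `0/0 = 0` and `c/0 = ∞` for `c ≠ 0`). -/
theorem stationary_solution_necessary_conditions
    (a b : ℝ → ℝ)
    (ha : ContinuousOn a (Set.Icc 0 1)) (hb : ContinuousOn b (Set.Icc 0 1))
    (ha0 : ∀ u ∈ Set.Icc (0:ℝ) 1, 0 ≤ a u)
    (hD1 : StrictMonoOn (primitive a) (Set.Icc 0 1))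
    (F : ℝ → ℝ) (hF : IsCDF F)
    (hsol : IsStationarySolution (primitive a) (primitive b) F) :
    Continuous F ∧
    primitive b 1 = 0 ∧
    (∀ u ∈ Set.Icc (0:ℝ) 1, 0 ≤ primitive b u) ∧
    (∀ c d : ℝ, 0 < c → c ≤ d → d < 1 →
      (∫⁻ u in Set.Icc c d,
        ENNReal.ofReal (a u) / ENNReal.ofReal (2 * primitive b u)) < ⊤) := by
  obtain ⟨hF_cont, hB_one, hB_nonneg, hint⟩ := stationary_solution_necessary_conditions_general
    (continuousOn_primitive ha) (continuousOn_primitive hb) hD1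
    (fun _ => hasDerivAt_primitive ha) hF hsol
  simp only [primitive_zero, sub_zero] at hB_one hB_nonneg hint
  exact ⟨hF_cont, hB_one, hB_nonneg, fun c d hc _ hd => hint c d hc hd⟩
end
end
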